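/- For every t < ω, the triple (S_t^<(ω;ω), ≤, r) is a topological Ramsey space. -/

import Mathlib

open Topology

section Ellentuck

variable {R α : Type*}

/-- The basic set `[a,A] = {B ∈ R : B ≤ A and r_n(B) = a for some n}` of the
Ellentuck topology determined by a quasi-order `le` and approximation
mappings `r`. -/
def EllSet (le : R → R → Prop) (r : ℕ → R → α) (a : α) (A : R) : Set R :=
  {B | le B A ∧ ∃ n, r n B = a}

/-- The Ellentuck topology on `R`, generated by the basic sets `[a,A]`. -/
def EllTop (le : R → R → Prop) (r : ℕ → R → α) : TopologicalSpace R :=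
  TopologicalSpace.generateFrom {s | ∃ a A, s = EllSet le r a A}

/-- A set `S ⊆ R` is Ramsey: for every nonempty `[a,A]` there is `B ∈ [a,A]`
with `[a,B] ⊆ S` or `[a,B] ∩ S = ∅`. -/
def IsRamseySet (le : R → R → Prop) (r : ℕ → R → α) (S : Set R) : Prop :=
  ∀ (a : α) (A : R), (EllSet le r a A).Nonempty →
    ∃ B ∈ EllSet le r a A, EllSet le r a B ⊆ S ∨ EllSet le r a B ∩ S = ∅

/-- A set `S ⊆ R` is Ramsey null: for every nonempty `[a,A]` there is
`B ∈ [a,A]` with `[a,B] ∩ S = ∅`. -/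
def IsRamseyNullSet (le : R → R → Prop) (r : ℕ → R → α) (S : Set R) : Prop :=
  ∀ (a : α) (A : R), (EllSet le r a A).Nonempty →
    ∃ B ∈ EllSet le r a A, EllSet le r a B ∩ S = ∅

/-- A set has the property of Baire with respect to a topology `t`: it is the
symmetric difference of a `t`-open set and a `t`-meager set. -/
def HasPropertyOfBaire (t : TopologicalSpace R) (S : Set R) : Prop :=
  ∃ U M : Set R, IsOpen[t] U ∧ @IsMeagre R t M ∧ S = symmDiff U M

/-- `(R, ≤, r)` is a topological Ramsey space: every subset of `R` with the
property of Baire in the Ellentuck topology is Ramsey, and every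
Ellentuck-meager subset is Ramsey null. -/
def IsTopRamseySpace (le : R → R → Prop) (r : ℕ → R → α) : Prop :=
  (∀ S : Set R, HasPropertyOfBaire (EllTop le r) S → IsRamseySet le r S) ∧
  (∀ S : Set R, @IsMeagre R (EllTop le r) S → IsRamseyNullSet le r S)

end Ellentuck

/-- The space `S_t(ω;ω)` of parameter words: surjections `A : t+ω → t+ω`
which are the identity below `t` and whose classes are ordered by their
minima (`min A^{-1}({j}) < min A^{-1}({j'})` for `j < j'`). -/
def St (t : ℕ) : Set (ℕ → ℕ) :=
  {A | (∀ j, ∃ i, A i = j) ∧ (∀ i < t, A i = i) ∧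
       ∀ j j', j < j' → ∃ i, A i = j ∧ ∀ i', A i' = j' → i < i'}

/-- The space `S_t(ω;k)`: surjections `A : t+ω → t+k` which are the identity
below `t` and whose classes are ordered by their minima. -/
def StK (t k : ℕ) : Set (ℕ → ℕ) :=
  {A | (∀ i, A i < t + k) ∧ (∀ j < t + k, ∃ i, A i = j) ∧ (∀ i < t, A i = i) ∧
       ∀ j j', j < j' → j' < t + k → ∃ i, A i = j ∧ ∀ i', A i' = j' → i < i'}

/-- The composition `(A·B)(i) = B(A(i))`. -/
def compP (A B : ℕ → ℕ) : ℕ → ℕ := fun i => B (A i)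

/-- The approximation map: `r(0,A) = ∅` and, for `n > 0`, `r(n,A)` is the
restriction of `A` to the initial segment `{0, …, min A^{-1}({t+n}) − 1}`. -/
noncomputable def rP (t : ℕ) (n : ℕ) (A : ℕ → ℕ) : List ℕ :=
  if n = 0 then [] else List.ofFn fun i : Fin (sInf {i | A i = t + n}) => A i

/-- The space `S_t^<(ω;ω)` of ascending parameter words: elements of
`S_t(ω;ω)` whose classes `A^{-1}({t+j})` are finite and occur in successive
blocks (`max A^{-1}({t+i}) < min A^{-1}({t+j})` for `i < j`). -/
def StLt (t : ℕ) : Set (ℕ → ℕ) :=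
  {A | A ∈ St t ∧ (∀ j, {i | A i = t + j}.Finite) ∧
       ∀ j j', j < j' → ∀ i i', A i = t + j → A i' = t + j' → i < i'}

/-- The space `S_t^<(ω;k)`: elements of `S_t(ω;k)` whose classes
`A^{-1}({t+j})`, `j < k`, are finite and occur in successive blocks. -/
def StLtK (t k : ℕ) : Set (ℕ → ℕ) :=
  {A | A ∈ StK t k ∧ (∀ j < k, {i | A i = t + j}.Finite) ∧
       ∀ j j', j < j' → j' < k → ∀ i i', A i = t + j → A i' = t + j' → i < i'}

section AbstractRamsey

variable {M : Type*} [Monoid M]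

/-- Diagonalization property of a sequence `G` of submonoids: a property of pairs which is
hereditary and dense with respect to `G` can be made to hold simultaneously below one `g`. -/
def Diagonalizes (G : ℕ → Submonoid M) : Prop :=
  ∀ Φ : M → ℕ → Prop,
    (∀ D j, Φ D j → ∀ h ∈ G j, Φ (D * h) j) →
    (∀ D j, ∃ h ∈ G j, Φ (D * h) j) →
    ∀ k, ∃ g ∈ G k, ∀ C, ∀ j ≥ k, Φ (g * C) j

/-- Pigeonhole property of a sequence `G` of submonoids, for two-colourings of `G j` which are
invariant under right multiplication by `G (j + 1)`. -/
def HasPigeonhole (G : ℕ → Submonoid M) : Prop :=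
  ∀ (j : ℕ) (S : Set M), (∀ C ∈ G j, ∀ h ∈ G (j + 1), (C ∈ S ↔ C * h ∈ S)) →
    ∃ h ∈ G j, (∀ C ∈ G j, h * C ∈ S) ∨ (∀ C ∈ G j, h * C ∉ S)

/-- A set of elements of `M` is null with respect to `G`. -/
def IsNullFor (G : ℕ → Submonoid M) (N : Set M) : Prop :=
  ∀ D j, ∃ h ∈ G j, ∀ C ∈ G j, D * h * C ∉ N

theorem Diagonalizes.homogeneous_of_open {G : ℕ → Submonoid M} (hG : Diagonalizes G)
    (hp : HasPigeonhole G) {U : Set M}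
    (hU : ∀ D ∈ U, ∀ k, ∃ j ≥ k, ∀ h ∈ G j, D * h ∈ U) (D : M) (k : ℕ) :
    ∃ g ∈ G k, (∀ C ∈ G k, D * g * C ∈ U) ∨ (∀ C ∈ G k, D * g * C ∉ U) := by
  set acc : M → ℕ → Prop := fun C j => ∀ h ∈ G j, D * C * h ∈ U with hacc
  set rej : M → ℕ → Prop := fun C j => ∀ h ∈ G j, ¬ acc (C * h) j with hrej
  have acc_mul : ∀ C j, acc C j → ∀ h ∈ G j, acc (C * h) j := by
    intro C j hC h hh h' hh'
    have := hC (h * h') (mul_mem hh hh')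
    simpa only [mul_assoc] using this
  have rej_mul : ∀ C j, rej C j → ∀ h ∈ G j, rej (C * h) j := by
    intro C j hC h hh h' hh'
    have := hC (h * h') (mul_mem hh hh')
    simpa only [mul_assoc] using this
  have not_both : ∀ C j, rej C j → ¬ acc C j := by
    intro C j hC
    simpa using hC 1 (one_mem _)
  obtain ⟨g, hg, hdec⟩ := hG (fun C j => acc C j ∨ rej C j)
    (fun C j h x hx => h.imp (acc_mul C j · x hx) (rej_mul C j · x hx))
    (fun C j => by
      by_cases h : rej C j
      · exact ⟨1, one_mem _, by simpa using Or.inr h⟩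
      · simp only [hrej, not_forall, not_not] at h
        obtain ⟨x, hx, h⟩ := h
        exact ⟨x, hx, Or.inl h⟩) k
  rcases (by simpa using hdec 1 k le_rfl : acc g k ∨ rej g k) with h | h
  · exact ⟨g, hg, Or.inl h⟩
  obtain ⟨g', hg', hall⟩ := hG
    (fun C j => k ≤ j → acc (g * C) j ∨ ∀ X ∈ G j, rej (g * C * X) (j + 1))
    (fun C j hC x hx hj => (hC hj).imp
      (fun h => by simpa only [mul_assoc] using acc_mul _ _ h x hx)
      (fun h X hX => by simpa only [mul_assoc] using h (x * X) (mul_mem hx hX)))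
    (fun C j => by
      by_cases hj : k ≤ j
      swap
      · exact ⟨1, one_mem _, fun h => absurd h hj⟩
      rcases hdec C j hj with hC | hC
      · exact ⟨1, one_mem _, fun _ => by simpa using Or.inl hC⟩
      obtain ⟨x, hx, hS⟩ := hp j {X | acc (g * C * X) (j + 1)} (by
        intro X _ y hy
        simp only [Set.mem_ofPred_eq, ← mul_assoc]
        refine ⟨fun h => acc_mul _ _ h y hy, fun h => ?_⟩
        rcases hdec (C * X) (j + 1) (by omega) with h' | h'
        · simpa only [mul_assoc] using h'
        · refine absurd ?_ (h' y hy)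
          simpa only [mul_assoc] using h)
      refine ⟨x, hx, fun _ => Or.inr fun X hX => ?_⟩
      rcases hS with hS | hS
      · refine absurd (fun X hX => ?_) (hC x hx)
        have := hS X hX 1 (one_mem _)
        simpa only [mul_assoc, mul_one] using this
      · rcases hdec (C * (x * X)) (j + 1) (by omega) with h' | h'
        · refine absurd ?_ (hS X hX)
          simpa only [mul_assoc, Set.mem_ofPred_eq] using h'
        · simpa only [mul_assoc] using h') k
  refine ⟨g * g', mul_mem hg hg', Or.inr fun C hC hmem => ?_⟩
  have key : ∀ j ≥ k, rej (g * (g' * C)) j := by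
    intro j hj
    induction j, hj using Nat.le_induction with
    | base => exact rej_mul _ _ h _ (mul_mem hg' hC)
    | succ j hj ih =>
      rcases hall C j hj hj with h' | h'
      · exact absurd h' (not_both _ _ ih)
      · simpa using h' 1 (one_mem _)
  obtain ⟨j, hj, hsub⟩ := hU _ hmem k
  refine not_both _ _ (key j hj) fun x hx => ?_
  simpa only [mul_assoc] using hsub x hx

theorem Diagonalizes.isNullFor_iUnion {G : ℕ → Submonoid M} (hG : Diagonalizes G)
    {N : ℕ → Set M} (hN : ∀ n, IsNullFor G (N n)) : IsNullFor G (⋃ n, N n) := by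
  intro D k
  obtain ⟨g, hg, hall⟩ := hG (fun C j => ∀ n ≤ j, ∀ X ∈ G j, D * C * X ∉ N n)
    (fun C j hC x hx n hn X hX => by
      simpa only [mul_assoc] using hC n hn (x * X) (mul_mem hx hX))
    (fun C j => by
      suffices ∀ m, ∃ h ∈ G j, ∀ n < m, ∀ X ∈ G j, D * (C * h) * X ∉ N n by
        obtain ⟨h, hh, H⟩ := this (j + 1)
        exact ⟨h, hh, fun n hn => H n (by omega)⟩
      intro m
      induction m with
      | zero => exact ⟨1, one_mem _, by simp⟩
      | succ m ih =>
        obtain ⟨h, hh, H⟩ := ih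
        obtain ⟨h', hh', H'⟩ := hN m (D * (C * h)) j
        refine ⟨h * h', mul_mem hh hh', fun n hn X hX => ?_⟩
        rcases Nat.lt_succ_iff_lt_or_eq.mp hn with hn | rfl
        · simpa only [mul_assoc] using H n hn (h' * X) (mul_mem hh' hX)
        · simpa only [mul_assoc] using H' X hX) k
  refine ⟨g, hg, fun C hC hmem => ?_⟩
  obtain ⟨n, hn⟩ := Set.mem_iUnion.mp hmem
  have := hall C (max n k) (le_max_right _ _) n (le_max_left _ _) 1 (one_mem _)
  exact this (by simpa only [mul_assoc, mul_one] using hn)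

end AbstractRamsey

section IdempotentUltrafilters

/-- In a compact right topological semigroup, let `T` be a closed subsemigroup and `I` a closed
two-sided ideal of `T ∪ I`. Then there are idempotents `v ≤ u` with `u ∈ T`, `v ∈ I` such that
every homomorphism retracting onto `T` sends `v` to `u`. -/
theorem exists_idempotent_pair {X : Type*} [Semigroup X] [TopologicalSpace X] [CompactSpace X]
    [T2Space X] (hcont : ∀ r : X, Continuous (· * r)) {T I : Set X}
    (hTc : IsClosed T) (hTne : T.Nonempty) (hT : ∀ a ∈ T, ∀ b ∈ T, a * b ∈ T)
    (hIc : IsClosed I) (hIne : I.Nonempty) (hI : ∀ a ∈ I, ∀ b ∈ I, a * b ∈ I)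
    (hIT : ∀ a ∈ I, ∀ b ∈ T, a * b ∈ I) (hTI : ∀ a ∈ T, ∀ b ∈ I, a * b ∈ I)
    {F : Set (X → X)} (hF : ∀ f ∈ F, ∀ a b, f (a * b) = f a * f b)
    (hFI : ∀ f ∈ F, ∀ a ∈ I, f a ∈ T) (hFT : ∀ f ∈ F, ∀ a ∈ T, f a = a) :
    ∃ u ∈ T, ∃ v ∈ I, u * u = u ∧ v * v = v ∧ u * v = v ∧ v * u = v ∧ ∀ f ∈ F, f v = u := by
  let P : Set (Set X) :=
    {L | IsClosed L ∧ L.Nonempty ∧ L ⊆ T ∧ ∀ a ∈ T, ∀ b ∈ L, a * b ∈ L}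
  obtain ⟨L, -, hL⟩ : ∃ L, L ⊆ T ∧ Minimal (· ∈ P) L := by
    refine zorn_superset_nonempty P ?_ T ⟨hTc, hTne, subset_rfl, hT⟩
    intro c hcP hc hcne
    refine ⟨⋂₀ c, ⟨isClosed_sInter fun s hs => (hcP hs).1, ?_, ?_, ?_⟩,
      fun s hs => Set.sInter_subset_of_mem hs⟩
    · have := hcne.to_subtype
      rw [Set.sInter_eq_iInter]
      exact IsCompact.nonempty_iInter_of_directed_nonempty_isCompact_isClosed _
        (DirectedOn.directed_val (IsChain.directedOn hc.symm))
        (fun i => (hcP i.2).2.1) (fun i => (hcP i.2).1.isCompact) (fun i => (hcP i.2).1)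
    · obtain ⟨s, hs⟩ := hcne
      exact (Set.sInter_subset_of_mem hs).trans (hcP hs).2.2.1
    · exact fun a ha b hb s hs => (hcP hs).2.2.2 a ha b (hb s hs)
  obtain ⟨hLc, hLne, hLT, hLmul⟩ := hL.prop
  obtain ⟨u, huL, huu⟩ := exists_idempotent_in_compact_subsemigroup hcont L hLne hLc.isCompact
    (fun a ha b hb => hLmul a (hLT ha) b hb)
  have huT := hLT huL
  obtain ⟨e, ⟨q, hq, rfl⟩, hee⟩ := exists_idempotent_in_compact_subsemigroup hcont
    ((· * u) '' I) (hIne.image _) (hIc.isCompact.image (hcont u)) (by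
      rintro _ ⟨a, ha, rfl⟩ _ ⟨b, hb, rfl⟩
      exact ⟨a * u * b, hI _ (hIT _ ha _ huT) _ hb, by simp only [mul_assoc]⟩)
  replace hee : q * u * (q * u) = q * u := hee
  set v := u * (q * u) with hv
  have hvI : v ∈ I := hTI _ huT _ (hIT _ hq _ huT)
  have hvv : v * v = v := by
    calc u * (q * u) * (u * (q * u)) = u * (q * (u * u) * (q * u)) := by simp only [mul_assoc]
      _ = u * (q * u) := by rw [huu, hee]
  have huv : u * v = v := by rw [hv, ← mul_assoc, huu]
  have hvu : v * u = v := by simp only [hv, mul_assoc, huu]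
  refine ⟨u, huT, v, hvI, huu, hvv, huv, hvu, fun f hf => ?_⟩
  have h1 : u * f v = f v := by
    have := hF f hf u v
    rwa [huv, hFT f hf u huT, eq_comm] at this
  have h2 : f v * u = f v := by
    have := hF f hf v u
    rwa [hvu, hFT f hf u huT, eq_comm] at this
  have h3 : f v * f v = f v := by rw [← hF f hf, hvv]
  have hfvT : f v ∈ T := hFI f hf v hvI
  have hfvL : f v ∈ L := h2 ▸ hLmul _ hfvT _ huL
  have hmem : (· * f v) '' T ∈ P := by
    refine ⟨(hTc.isCompact.image (hcont _)).isClosed, hTne.image _, ?_, ?_⟩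
    · rintro _ ⟨a, ha, rfl⟩
      exact hT _ ha _ hfvT
    · rintro a ha _ ⟨b, hb, rfl⟩
      exact ⟨a * b, hT _ ha _ hb, by simp only [mul_assoc]⟩
  have hsub : (· * f v) '' T ⊆ L := by
    rintro _ ⟨a, ha, rfl⟩
    exact hLmul _ ha _ hfvL
  obtain ⟨z, -, hz⟩ := hL.le_of_le hmem hsub huL
  replace hz : z * f v = u := hz
  calc f v = u * f v := h1.symm
    _ = z * f v * f v := by rw [hz]
    _ = u := by rw [mul_assoc, h3, hz]

end IdempotentUltrafilters

section VariableWords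

/-- The letter substituted for the variable `t` when letters below `t` are constants. -/
def substVar (t c n : ℕ) : ℕ := if n < t then n else c

theorem substVar_of_lt {t n : ℕ} (c : ℕ) (h : n < t) : substVar t c n = n := if_pos h

theorem substVar_self (t c : ℕ) : substVar t c t = c := if_neg (lt_irrefl t)

theorem map_substVar_self {t : ℕ} {w : List ℕ} (hw : ∀ n ∈ w, n ≤ t) :
    w.map (substVar t t) = w := by
  refine (List.map_congr_left fun n hn => ?_).trans w.map_id
  rcases (hw n hn).lt_or_eq with h | rfl
  · exact substVar_of_lt _ h
  · exact substVar_self _ _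

theorem map_substVar_of_lt {t : ℕ} (c : ℕ) {w : List ℕ} (hw : ∀ n ∈ w, n < t) :
    w.map (substVar t c) = w :=
  (List.map_congr_left fun n hn => substVar_of_lt c (hw n hn)).trans w.map_id

/-- An idempotent ultrafilter `v` on variable words all of whose evaluations at constant letters
equal the same idempotent `u` on constant words, with `v ≤ u`. -/
theorem exists_variable_word_ultrafilters (t : ℕ) :
    ∃ u v : Ultrafilter (List ℕ),
      (∀ᶠ s in (u : Filter (List ℕ)), ∀ n ∈ s, n < t) ∧
      (∀ᶠ s in (v : Filter (List ℕ)), t ∈ s ∧ ∀ n ∈ s, n ≤ t) ∧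
      (∀ Q : List ℕ → Prop, (∀ᶠ s in (u : Filter (List ℕ)), Q s) →
        ∀ᶠ s in (u : Filter (List ℕ)), ∀ᶠ w in (u : Filter (List ℕ)), Q (s ++ w)) ∧
      (∀ Q : List ℕ → Prop, (∀ᶠ s in (v : Filter (List ℕ)), Q s) →
        ∀ᶠ s in (v : Filter (List ℕ)), ∀ᶠ w in (v : Filter (List ℕ)), Q (s ++ w)) ∧
      (∀ Q : List ℕ → Prop, (∀ᶠ s in (v : Filter (List ℕ)), Q s) →
        ∀ᶠ s in (u : Filter (List ℕ)), ∀ᶠ w in (v : Filter (List ℕ)), Q (s ++ w)) ∧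
      (∀ Q : List ℕ → Prop, (∀ᶠ s in (v : Filter (List ℕ)), Q s) →
        ∀ᶠ s in (v : Filter (List ℕ)), ∀ᶠ w in (u : Filter (List ℕ)), Q (s ++ w)) ∧
      (∀ a < t, v.map (List.map (substVar t a)) = u) := by
  let : Semigroup (List ℕ) := { mul := (· ++ ·), mul_assoc := List.append_assoc }
  let := Ultrafilter.semigroup (M := List ℕ)
  have mul_def : ∀ a b : List ℕ, a * b = a ++ b := fun _ _ => rfl
  let W : Set (List ℕ) := {s | ∀ n ∈ s, n < t}
  let V : Set (List ℕ) := {s | t ∈ s ∧ ∀ n ∈ s, n ≤ t}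
  have closed : ∀ Y : Set (List ℕ), IsClosed {q : Ultrafilter (List ℕ) | Y ∈ q} :=
    fun Y => ultrafilter_isClosed_basic Y
  have mul_mem' : ∀ A B C : Set (List ℕ), (∀ a ∈ A, ∀ b ∈ B, a * b ∈ C) →
      ∀ p ∈ {q : Ultrafilter (List ℕ) | A ∈ q}, ∀ q ∈ {q : Ultrafilter (List ℕ) | B ∈ q},
        p * q ∈ {q : Ultrafilter (List ℕ) | C ∈ q} := by
    intro A B C h p hp q hq
    refine (Ultrafilter.eventually_mul p q (· ∈ C)).mpr ?_
    filter_upwards [hp] with a ha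
    filter_upwards [hq] with b hb using h a ha b hb
  have map_mul' : ∀ f : List ℕ → List ℕ, (∀ a b, f (a * b) = f a * f b) →
      ∀ p q : Ultrafilter (List ℕ), (p * q).map f = p.map f * q.map f := by
    intro f hf p q
    ext Y
    have h1 := Ultrafilter.eventually_mul p q (fun x => f x ∈ Y)
    have h2 := Ultrafilter.eventually_mul (p.map f) (q.map f) (· ∈ Y)
    simp only [hf] at h1
    exact h1.trans h2.symm
  obtain ⟨u, hu, v, hv, huu, hvv, huv, hvu, hF⟩ := exists_idempotent_pair
    (X := Ultrafilter (List ℕ)) Ultrafilter.continuous_mul_left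
    (T := {q | W ∈ q}) (I := {q | V ∈ q}) (closed W)
    ⟨pure [], by simp [W]⟩
    (mul_mem' W W W fun a ha b hb n hn => (List.mem_append.mp hn).elim (ha n) (hb n))
    (closed V) ⟨pure [t], by simp [V]⟩
    (mul_mem' V V V fun a ha b hb => ⟨List.mem_append_left _ ha.1, fun n hn =>
      (List.mem_append.mp hn).elim (ha.2 n) (hb.2 n)⟩)
    (mul_mem' V W V fun a ha b hb => ⟨List.mem_append_left _ ha.1, fun n hn =>
      (List.mem_append.mp hn).elim (ha.2 n) fun h => (hb n h).le⟩)
    (mul_mem' W V V fun a ha b hb => ⟨List.mem_append_right _ hb.1, fun n hn =>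
      (List.mem_append.mp hn).elim (fun h => (ha n h).le) (hb.2 n)⟩)
    (F := {f | ∃ a < t, f = Ultrafilter.map (List.map (substVar t a))})
    (by
      rintro _ ⟨a, -, rfl⟩ p q
      exact map_mul' _ (fun _ _ => List.map_append) p q)
    (by
      rintro _ ⟨a, ha, rfl⟩ p hp
      refine Filter.mem_of_superset hp fun s hs n hn => ?_
      obtain ⟨m, hm, rfl⟩ := List.mem_map.mp hn
      unfold substVar
      split_ifs <;> assumption)
    (by
      rintro _ ⟨a, -, rfl⟩ p hp
      have : (List.map (substVar t a)) =ᶠ[(p : Filter (List ℕ))] id := by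
        filter_upwards [hp] with s hs using map_substVar_of_lt a hs
      exact Ultrafilter.coe_injective ((Filter.map_congr this).trans Filter.map_id))
  have key : ∀ p q r : Ultrafilter (List ℕ), p * q = r → ∀ Q : List ℕ → Prop,
      (∀ᶠ s in (r : Filter (List ℕ)), Q s) →
        ∀ᶠ s in (p : Filter (List ℕ)), ∀ᶠ w in (q : Filter (List ℕ)), Q (s ++ w) := by
    rintro p q _ rfl Q hQ
    exact (Ultrafilter.eventually_mul p q Q).mp hQ
  exact ⟨u, v, hu, hv, key _ _ _ huu, key _ _ _ hvv, key _ _ _ huv, key _ _ _ hvu,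
    fun a ha => hF _ ⟨a, ha, rfl⟩⟩

theorem exists_variable_words_of_ultrafilters {t e : ℕ} {p v : Ultrafilter (List ℕ)}
    (hpe : ∀ᶠ s in (p : Filter (List ℕ)), ∀ n ∈ s, n < e)
    (hv : ∀ᶠ s in (v : Filter (List ℕ)), t ∈ s ∧ ∀ n ∈ s, n ≤ t)
    (hpv : ∀ a < e, ∀ Q : List ℕ → Prop, (∀ᶠ s in (p : Filter (List ℕ)), Q s) →
      ∀ᶠ s in (p : Filter (List ℕ)), ∀ᶠ w in (v : Filter (List ℕ)), Q (s ++ w.map (substVar t a)))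
    (hvv : ∀ Q : List ℕ → Prop,
      (∀ c < e, ∀ᶠ w in (v : Filter (List ℕ)), Q (w.map (substVar t c))) →
      ∀ a < e, ∀ b < e, ∀ᶠ w in (v : Filter (List ℕ)), ∀ᶠ w' in (v : Filter (List ℕ)),
        Q (w.map (substVar t a) ++ w'.map (substVar t b)))
    (P : List ℕ → Prop)
    (hP : ∀ᶠ s in (p : Filter (List ℕ)), ∀ᶠ w in (v : Filter (List ℕ)),
      P (s ++ w.takeWhile (· ≠ t))) :
    ∃ (w₀ : List ℕ) (w : ℕ → List ℕ) (F : ℕ → Set (List ℕ)),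
      (∀ n ∈ w₀, n < e) ∧ (∀ k, t ∈ w k ∧ ∀ n ∈ w k, n ≤ t) ∧ w₀ ∈ F 0 ∧
      (∀ k, ∀ s ∈ F k, ∀ a < e, s ++ (w k).map (substVar t a) ∈ F (k + 1)) ∧
      ∀ k, ∀ s ∈ F k, P (s ++ (w k).takeWhile (· ≠ t)) := by
  classical
  let P' : List ℕ → Prop := fun s => ∀ᶠ w in (v : Filter (List ℕ)), P (s ++ w.takeWhile (· ≠ t))
  let Q : List ℕ → Prop := fun s =>
    P' s ∧ ∀ a < e, ∀ᶠ w in (v : Filter (List ℕ)), P' (s ++ w.map (substVar t a))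
  have hall : ∀ {l : Filter (List ℕ)} {R : List ℕ → ℕ → Prop},
      (∀ a < e, ∀ᶠ s in l, R s a) → ∀ᶠ s in l, ∀ a < e, R s a := by
    intro l R h
    exact (Filter.eventually_all_finite (Set.finite_Iio e)).mpr h
  have hQp : ∀ᶠ s in (p : Filter (List ℕ)), Q s :=
    hP.and (hall fun a ha => hpv a ha P' hP)
  have hQ : ∀ s, Q s → ∀ a < e, ∀ᶠ w in (v : Filter (List ℕ)), Q (s ++ w.map (substVar t a)) := by
    intro s hs a ha
    refine (hs.2 a ha).and (hall fun b hb => ?_)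
    simpa only [List.append_assoc] using hvv (fun w => P' (s ++ w)) hs.2 a ha b hb
  obtain ⟨w₀, hw₀Q, hw₀⟩ := (hQp.and hpe).exists
  have step : ∀ F : {F : Finset (List ℕ) // ∀ s ∈ F, Q s}, ∃ w : List ℕ,
      (t ∈ w ∧ ∀ n ∈ w, n ≤ t) ∧ ∀ s ∈ F.1, P (s ++ w.takeWhile (· ≠ t)) ∧
        ∀ a < e, Q (s ++ w.map (substVar t a)) := by
    intro F
    refine (hv.and ((Filter.eventually_all_finset F.1).mpr fun s hs => ?_)).exists
    exact (F.2 s hs).1.and (hall (hQ s (F.2 s hs)))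
  choose wf hwf hwfF using step
  let next : {F : Finset (List ℕ) // ∀ s ∈ F, Q s} → {F : Finset (List ℕ) // ∀ s ∈ F, Q s} :=
    fun F => ⟨Finset.image₂ (fun s a => s ++ (wf F).map (substVar t a)) F.1 (Finset.range e), by
      intro s hs
      obtain ⟨x, hx, a, ha, rfl⟩ := Finset.mem_image₂.mp hs
      exact (hwfF F x hx).2 a (Finset.mem_range.mp ha)⟩
  let F : ℕ → {F : Finset (List ℕ) // ∀ s ∈ F, Q s} :=
    fun k => next^[k] ⟨{w₀}, by simpa using hw₀Q⟩
  refine ⟨w₀, fun k => wf (F k), fun k => {s | s ∈ (F k).1}, hw₀, fun k => hwf _, ?_, ?_, ?_⟩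
  · simp [F]
  · intro k s hs a ha
    simp only [F, Function.iterate_succ_apply', Set.mem_ofPred_eq]
    exact Finset.mem_image₂.mpr ⟨s, hs, a, Finset.mem_range.mpr ha, rfl⟩
  · exact fun k s hs => (hwfF _ s hs).1

/-- Left-variable-word theorem of Carlson and Simpson type. For a two-colouring of words over
the alphabet `e`, where `e = t` or `e = t + 1`, there are `w₀` and variable words `w k` over `t`
such that the words `w₀ (w 0)(a₀) ⋯ (w (k-1))(a_{k-1})`, followed by the part of `w k` preceding
its first variable, all have the same colour. -/
theorem exists_variable_words {t e : ℕ} (he : e = t ∨ e = t + 1) (P : List ℕ → Prop) :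
    ∃ (w₀ : List ℕ) (w : ℕ → List ℕ) (F : ℕ → Set (List ℕ)),
      (∀ n ∈ w₀, n < e) ∧ (∀ k, t ∈ w k ∧ ∀ n ∈ w k, n ≤ t) ∧ w₀ ∈ F 0 ∧
      (∀ k, ∀ s ∈ F k, ∀ a < e, s ++ (w k).map (substVar t a) ∈ F (k + 1)) ∧
      ((∀ k, ∀ s ∈ F k, P (s ++ (w k).takeWhile (· ≠ t))) ∨
        ∀ k, ∀ s ∈ F k, ¬ P (s ++ (w k).takeWhile (· ≠ t))) := by
  obtain ⟨u, v, hu, hv, huu, hvv, huv, hvu, hmap⟩ := exists_variable_word_ultrafilters t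
  have hmap' : ∀ a < t, ∀ Q : List ℕ → Prop,
      (∀ᶠ w in (v : Filter (List ℕ)), Q (w.map (substVar t a))) ↔
        ∀ᶠ w in (u : Filter (List ℕ)), Q w := by
    intro a ha Q
    rw [← hmap a ha]
    exact Iff.rfl
  have hmapt : ∀ Q : List ℕ → Prop,
      (∀ᶠ w in (v : Filter (List ℕ)), Q (w.map (substVar t t))) ↔
        ∀ᶠ w in (v : Filter (List ℕ)), Q w := by
    intro Q
    refine Filter.eventually_congr (hv.mono fun w hw => ?_)
    rw [map_substVar_self hw.2]
  obtain ⟨p, hpe, hpv, hvv'⟩ : ∃ p : Ultrafilter (List ℕ),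
      (∀ᶠ s in (p : Filter (List ℕ)), ∀ n ∈ s, n < e) ∧
      (∀ a < e, ∀ Q : List ℕ → Prop, (∀ᶠ s in (p : Filter (List ℕ)), Q s) →
        ∀ᶠ s in (p : Filter (List ℕ)), ∀ᶠ w in (v : Filter (List ℕ)),
          Q (s ++ w.map (substVar t a))) ∧
      (∀ Q : List ℕ → Prop,
        (∀ c < e, ∀ᶠ w in (v : Filter (List ℕ)), Q (w.map (substVar t c))) →
        ∀ a < e, ∀ b < e, ∀ᶠ w in (v : Filter (List ℕ)), ∀ᶠ w' in (v : Filter (List ℕ)),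
          Q (w.map (substVar t a) ++ w'.map (substVar t b))) := by
    rcases he with rfl | rfl
    · refine ⟨u, hu, fun a ha Q hQ => ?_, fun Q hQ a ha b hb => ?_⟩
      · exact (huu Q hQ).mono fun s hs => (hmap' a ha fun w => Q (s ++ w)).mpr hs
      · refine (hmap' a ha fun w => ∀ᶠ w' in (v : Filter (List ℕ)),
          Q (w ++ w'.map (substVar e b))).mpr ?_
        exact (huu Q ((hmap' a ha Q).mp (hQ a ha))).mono
          fun s hs => (hmap' b hb fun w => Q (s ++ w)).mpr hs
    · refine ⟨v, hv.mono fun s hs n hn => Nat.lt_succ_of_le (hs.2 n hn), fun a ha Q hQ => ?_,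
        fun Q hQ a ha b hb => ?_⟩
      · rcases Nat.lt_succ_iff_lt_or_eq.mp ha with ha | rfl
        · exact (hvu Q hQ).mono fun s hs => (hmap' a ha fun w => Q (s ++ w)).mpr hs
        · exact (hvv Q hQ).mono fun s hs => (hmapt fun w => Q (s ++ w)).mpr hs
      · have hQv := (hmapt Q).mp (hQ t (Nat.lt_succ_self t))
        rcases Nat.lt_succ_iff_lt_or_eq.mp ha with ha | rfl
        · refine (hmap' a ha fun w => ∀ᶠ w' in (v : Filter (List ℕ)),
            Q (w ++ w'.map (substVar t b))).mpr ?_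
          rcases Nat.lt_succ_iff_lt_or_eq.mp hb with hb | rfl
          · exact (huu Q ((hmap' a ha Q).mp (hQ a (by omega)))).mono
              fun s hs => (hmap' b hb fun w => Q (s ++ w)).mpr hs
          · exact (huv Q hQv).mono fun s hs => (hmapt fun w => Q (s ++ w)).mpr hs
        · refine (hmapt fun w => ∀ᶠ w' in (v : Filter (List ℕ)),
            Q (w ++ w'.map (substVar a b))).mpr ?_
          rcases Nat.lt_succ_iff_lt_or_eq.mp hb with hb | rfl
          · exact (hvu Q hQv).mono fun s hs => (hmap' b hb fun w => Q (s ++ w)).mpr hs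
          · exact (hvv Q hQv).mono fun s hs => (hmapt fun w => Q (s ++ w)).mpr hs
  have hdich : (∀ᶠ s in (p : Filter (List ℕ)), ∀ᶠ w in (v : Filter (List ℕ)),
        P (s ++ w.takeWhile (· ≠ t))) ∨
      ∀ᶠ s in (p : Filter (List ℕ)), ∀ᶠ w in (v : Filter (List ℕ)),
        ¬ P (s ++ w.takeWhile (· ≠ t)) := by
    simp only [Ultrafilter.eventually_not]
    exact or_iff_not_imp_left.mpr id
  rcases hdich with h | h
  · obtain ⟨w₀, w, F, h1, h2, h3, h4, h5⟩ :=
      exists_variable_words_of_ultrafilters hpe hv hpv hvv' P h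
    exact ⟨w₀, w, F, h1, h2, h3, h4, Or.inl h5⟩
  · obtain ⟨w₀, w, F, h1, h2, h3, h4, h5⟩ :=
      exists_variable_words_of_ultrafilters hpe hv hpv hvv' (fun s => ¬ P s) h
    exact ⟨w₀, w, F, h1, h2, h3, h4, Or.inr h5⟩

end VariableWords

section AscendingWords

variable {t : ℕ}

theorem mem_StLt_iff {A : ℕ → ℕ} :
    A ∈ StLt t ↔ (∀ i < t, A i = i) ∧
      (∀ i i', i ≤ i' → t ≤ A i → t ≤ A i' → A i ≤ A i') ∧ Function.Surjective A := by
  constructor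
  · rintro ⟨⟨hs, hf, -⟩, -, hlt⟩
    refine ⟨hf, fun i i' hii h h' => ?_, hs⟩
    by_contra! hlt'
    have := hlt (A i' - t) (A i - t) (by omega) i' i (by omega) (by omega)
    omega
  · rintro ⟨hf, hm, hs⟩
    have hord : ∀ i i', t ≤ A i → A i < A i' → i < i' := by
      intro i i' h h'
      by_contra! hle
      have := hm i' i hle (by omega) h
      omega
    refine ⟨⟨hs, hf, fun j j' hj => ?_⟩, fun j => ?_, fun j j' hj i i' h h' => ?_⟩
    · by_cases hjt : j < t
      · refine ⟨j, hf j hjt, fun i' h' => ?_⟩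
        by_contra! hle
        have := hf i' (by omega)
        omega
      · obtain ⟨i, hi⟩ := hs j
        exact ⟨i, hi, fun i' h' => hord i i' (by omega) (by omega)⟩
    · obtain ⟨i₀, hi₀⟩ := hs (t + j + 1)
      refine (Set.finite_Iio i₀).subset fun i hi => ?_
      rw [Set.mem_ofPred_eq] at hi
      exact hord i i₀ (by omega) (by omega)
    · exact hord i i' (by omega) (by omega)

namespace StLt

theorem apply_of_lt (A : StLt t) {i : ℕ} (hi : i < t) : A.1 i = i := (mem_StLt_iff.mp A.2).1 i hi

theorem apply_mono (A : StLt t) {i i' : ℕ} (h : i ≤ i') (hi : t ≤ A.1 i) (hi' : t ≤ A.1 i') :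
    A.1 i ≤ A.1 i' := (mem_StLt_iff.mp A.2).2.1 i i' h hi hi'

theorem exists_apply_eq (A : StLt t) (n : ℕ) : ∃ i, A.1 i = n := (mem_StLt_iff.mp A.2).2.2 n

theorem apply_le (A : StLt t) (i : ℕ) : A.1 i ≤ i := by
  induction i using Nat.strong_induction_on with
  | _ i ih =>
    by_cases hi : i < t
    · exact (apply_of_lt A hi).le
    by_contra! hlt
    obtain ⟨i', hi'⟩ := exists_apply_eq A (A.1 i - 1)
    rcases lt_trichotomy i' i with h | rfl | h
    · have := ih i' h
      omega
    · omega
    · have := apply_mono A h.le (by omega) (by omega)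
      omega

instance : Monoid (StLt t) where
  mul A B := ⟨compP A.1 B.1, by
    rw [mem_StLt_iff]
    refine ⟨fun i hi => ?_, fun i i' h hi hi' => ?_, fun n => ?_⟩
    · simp only [compP]
      rw [apply_of_lt A hi, apply_of_lt B hi]
    · have large : ∀ x, t ≤ B.1 x → t ≤ x := fun x hx => hx.trans (apply_le B x)
      exact apply_mono B (apply_mono A h (large _ hi) (large _ hi')) hi hi'
    · obtain ⟨m, hm⟩ := exists_apply_eq B n
      obtain ⟨l, hl⟩ := exists_apply_eq A m
      exact ⟨l, by simp only [compP, hl, hm]⟩⟩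
  one := ⟨id, mem_StLt_iff.mpr
    ⟨fun _ _ => rfl, fun _ _ h _ _ => h, Function.surjective_id⟩⟩
  mul_assoc _ _ _ := rfl
  one_mul _ := rfl
  mul_one _ := rfl

theorem mul_apply (A B : StLt t) (i : ℕ) : (A * B).1 i = B.1 (A.1 i) := rfl

/-- The submonoid of ascending parameter words which are the identity below `t + j`. -/
def fixing (t j : ℕ) : Submonoid (StLt t) where
  carrier := {A | ∀ i < t + j, A.1 i = i}
  one_mem' := fun _ _ => rfl
  mul_mem' := fun {A B} hA hB i hi => by rw [mul_apply, hA i hi, hB i hi]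

theorem fixing_antitone (t : ℕ) : Antitone (fixing t) :=
  fun _ _ h _ hA i hi => hA i (by omega)

theorem mem_fixing_zero (A : StLt t) : A ∈ fixing t 0 := fun _ hi => apply_of_lt A hi

theorem le_apply_of_mem_fixing {j : ℕ} {A : StLt t} (hA : A ∈ fixing t (j + 1)) {i : ℕ}
    (hi : t + j ≤ i) (ht : t ≤ A.1 i) : t + j ≤ A.1 i := by
  have hn : A.1 (t + j) = t + j := hA _ (by omega)
  have := apply_mono A hi (by omega) ht
  omega

/-! ### Infinite products -/

theorem exists_limit {k : ℕ} {h : ℕ → StLt t} (hh : ∀ m, h m ∈ fixing t (k + m)) :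
    ∃ p ∈ fixing t k, ∀ d i, i < d → p.1 i = (((List.range d).map h).prod).1 i := by
  set P : ℕ → StLt t := fun d => ((List.range d).map h).prod with hP
  have P_succ : ∀ d i, (P (d + 1)).1 i = (h d).1 ((P d).1 i) := by
    intro d i
    simp only [hP, List.range_succ, List.map_append, List.prod_append, mul_apply]
    simp
  have stable : ∀ d d' i, (P d).1 i < t + k + d → d ≤ d' → (P d').1 i = (P d).1 i := by
    intro d d' i hi hd
    induction d', hd using Nat.le_induction with
    | base => rfl
    | succ d' hd ih => rw [P_succ, ih, hh d' _ (by omega)]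
  have stable' : ∀ d i, i < d → (P d).1 i = (P (i + 1)).1 i := by
    intro d i hi
    refine stable (i + 1) d i ?_ hi
    have := apply_le (P (i + 1)) i
    omega
  have Pfix : ∀ d, P d ∈ fixing t k := by
    intro d
    refine list_prod_mem fun x hx => ?_
    obtain ⟨m, -, rfl⟩ := List.mem_map.mp hx
    exact fixing_antitone t (Nat.le_add_right k m) (hh m)
  refine ⟨⟨fun i => (P (i + 1)).1 i, mem_StLt_iff.mpr ⟨fun i hi => apply_of_lt (P (i + 1)) hi,
    fun i i' hii hi hi' => ?_, fun n => ?_⟩⟩, fun i hi => Pfix (i + 1) i hi,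
    fun d i hi => (stable' d i hi).symm⟩
  · rw [← stable' (i' + 1) i (by omega)] at hi ⊢
    exact apply_mono (P (i' + 1)) hii hi hi'
  · obtain ⟨i, hi⟩ := exists_apply_eq (P (n + 1)) n
    refine ⟨i, ?_⟩
    have h1 := stable (n + 1) (max (n + 1) (i + 1)) i (by omega) (le_max_left _ _)
    have h2 := stable' (max (n + 1) (i + 1)) i (by omega)
    exact h2.symm.trans (h1.trans hi)

theorem exists_fusion {k : ℕ} {h : ℕ → StLt t} (hh : ∀ m, h m ∈ fixing t (k + m)) :
    ∃ g ∈ fixing t k, ∀ m, ∃ p ∈ fixing t (k + m), g = ((List.range m).map h).prod * p := by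
  obtain ⟨g, hg, hgP⟩ := exists_limit hh
  refine ⟨g, hg, fun m => ?_⟩
  obtain ⟨p, hp, hpP⟩ := exists_limit (k := k + m) (h := fun d => h (m + d))
    (fun d => by simpa only [add_assoc] using hh (m + d))
  refine ⟨p, hp, Subtype.ext (funext fun i => ?_)⟩
  rw [mul_apply]
  set x := (((List.range m).map h).prod).1 i with hx
  rw [hpP (x + i + 1) x (by omega), hgP (m + (x + i + 1)) i (by omega), List.range_add,
    List.map_append, List.prod_append, mul_apply, List.map_map]
  rfl

theorem exists_forall_of_hereditary_of_dense {Q : ℕ → StLt t → Prop}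
    (her : ∀ m f, Q m f → ∀ h ∈ fixing t m, Q m (f * h))
    (dense : ∀ m f, ∃ h ∈ fixing t m, Q m (f * h)) (k : ℕ) :
    ∃ g ∈ fixing t k, ∀ m ≥ k, Q m g := by
  choose c hc hQ using dense
  let f : ℕ → StLt t := fun m => Nat.rec 1 (fun m x => x * c (k + m) x) m
  have hf : ∀ m, ((List.range m).map fun m => c (k + m) (f m)).prod = f m := by
    intro m
    induction m with
    | zero => rfl
    | succ m ih => simp [List.range_succ, ih, f]
  obtain ⟨g, hg, H⟩ := exists_fusion (h := fun m => c (k + m) (f m)) (fun m => hc _ _)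
  refine ⟨g, hg, fun m hm => ?_⟩
  obtain ⟨d, rfl⟩ := Nat.exists_eq_add_of_le hm
  obtain ⟨p, hp, rfl⟩ := H (d + 1)
  rw [hf]
  exact her _ _ (hQ _ _) p (fixing_antitone t (by omega) hp)

/-! ### Finite approximations -/

/-- `L` is the restriction of an ascending parameter word to the positions preceding the first
occurrence of the value `n`. -/
structure IsApprox (t : ℕ) (L : List ℕ) (n : ℕ) : Prop where
  le_length : t ≤ L.length
  fix : ∀ i (hi : i < L.length), i < t → L[i] = i
  pairwise : L.Pairwise fun a b => t ≤ a → t ≤ b → a ≤ b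
  mem_iff : ∀ a, a ∈ L ↔ a < n

theorem IsApprox.getElem_lt {L : List ℕ} {n : ℕ} (hL : IsApprox t L n) {i : ℕ}
    (hi : i < L.length) : L[i] < n := (hL.mem_iff _).mp (List.getElem_mem hi)

theorem IsApprox.le {L : List ℕ} {n : ℕ} (hL : IsApprox t L n) : n ≤ L.length := by
  have h : Finset.range n ⊆ L.toFinset := fun a ha => by
    rw [List.mem_toFinset, hL.mem_iff]
    exact Finset.mem_range.mp ha
  simpa using (Finset.card_le_card h).trans (List.toFinset_card_le L)

theorem isApprox_range (j : ℕ) : IsApprox t (List.range (t + j)) (t + j) where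
  le_length := by simp
  fix := by simp
  pairwise := List.pairwise_lt_range.imp fun h _ _ => h.le
  mem_iff := by simp

theorem IsApprox.append {L w : List ℕ} {n n' : ℕ} (hL : IsApprox t L n)
    (hw : w.Pairwise fun a b => t ≤ a → t ≤ b → a ≤ b) (hwn : ∀ a ∈ w, t ≤ a → n ≤ a + 1)
    (hmem : ∀ a, a < n ∨ a ∈ w ↔ a < n') : IsApprox t (L ++ w) n' where
  le_length := by
    have := hL.le_length
    rw [List.length_append]
    omega
  fix i hi hit := by
    have := hL.le_length
    rw [List.getElem_append_left (by omega)]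
    exact hL.fix i _ hit
  pairwise := List.pairwise_append.mpr ⟨hL.pairwise, hw, fun a ha b hb _ htb => by
    have h1 := (hL.mem_iff a).mp ha
    have h2 := hwn b hb htb
    omega⟩
  mem_iff a := by rw [List.mem_append, hL.mem_iff, hmem]

/-- The word `L` followed by `n, n + 1, n + 2, …`. -/
def extend (L : List ℕ) (n i : ℕ) : ℕ :=
  if h : i < L.length then L[i] else n + (i - L.length)

theorem extend_of_lt {L : List ℕ} {n i : ℕ} (h : i < L.length) : extend L n i = L[i] := dif_pos h

theorem extend_of_le {L : List ℕ} {n i : ℕ} (h : L.length ≤ i) :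
    extend L n i = n + (i - L.length) := dif_neg h.not_gt

/-- The canonical ascending parameter word with a given approximation. -/
def IsApprox.word {L : List ℕ} {n : ℕ} (hL : IsApprox t L n) : StLt t :=
  ⟨extend L n, mem_StLt_iff.mpr ⟨fun i hi => by
      have := hL.le_length
      rw [extend_of_lt (by omega), hL.fix _ _ hi],
    fun i i' h hi hi' => by
      by_cases h1 : i' < L.length
      · rw [extend_of_lt (by omega)] at hi ⊢
        rw [extend_of_lt h1] at hi' ⊢
        rcases h.lt_or_eq with h | rfl
        · exact List.pairwise_iff_getElem.mp hL.pairwise i i' _ h1 h hi hi'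
        · exact le_rfl
      · rw [extend_of_le (i := i') (by omega)]
        by_cases h2 : i < L.length
        · rw [extend_of_lt h2]
          have := hL.getElem_lt h2
          omega
        · rw [extend_of_le (by omega)]
          omega,
    fun a => by
      by_cases ha : a < n
      · obtain ⟨i, hi, rfl⟩ := List.mem_iff_getElem.mp ((hL.mem_iff a).mpr ha)
        exact ⟨i, extend_of_lt hi⟩
      · exact ⟨L.length + (a - n), by rw [extend_of_le (by omega)]; omega⟩⟩⟩

theorem IsApprox.word_of_lt {L : List ℕ} {n i : ℕ} (hL : IsApprox t L n) (h : i < L.length) :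
    hL.word.1 i = L[i] := extend_of_lt h

theorem IsApprox.word_of_le {L : List ℕ} {n i : ℕ} (hL : IsApprox t L n) (h : L.length ≤ i) :
    hL.word.1 i = n + (i - L.length) := extend_of_le h

/-- The restriction of `D` to the positions below `l`. -/
def restr (D : ℕ → ℕ) (l : ℕ) : List ℕ := (List.range l).map D

@[simp] theorem length_restr (D : ℕ → ℕ) (l : ℕ) : (restr D l).length = l := by simp [restr]

@[simp] theorem getElem_restr (D : ℕ → ℕ) (l i : ℕ) (h : i < (restr D l).length) :
    (restr D l)[i] = D i := by simp [restr]

theorem isApprox_restr (D : StLt t) {l n : ℕ} (hn : t ≤ n) (hl : D.1 l = n)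
    (hlt : ∀ i < l, D.1 i ≠ n) : IsApprox t (restr D.1 l) n where
  le_length := by
    have := apply_le D l
    rw [length_restr]
    omega
  fix i hi hit := by rw [getElem_restr, apply_of_lt D hit]
  pairwise := by
    rw [List.pairwise_iff_getElem]
    intro i j hi hj hij
    simpa only [getElem_restr] using apply_mono D hij.le
  mem_iff a := by
    simp only [restr, List.mem_map, List.mem_range]
    constructor
    · rintro ⟨i, hi, rfl⟩
      by_contra! hle
      have := apply_mono D hi.le (by omega) (by omega)
      exact hlt i hi (by omega)
    · intro ha
      by_cases hat : a < t
      · have := apply_le D l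
        exact ⟨a, by omega, apply_of_lt D hat⟩
      · obtain ⟨i, rfl⟩ := exists_apply_eq D a
        refine ⟨i, ?_, rfl⟩
        by_contra! hle
        have := apply_mono D hle (by omega) (by omega)
        omega

theorem IsApprox.exists_eq_word_mul {L : List ℕ} {j : ℕ} (hL : IsApprox t L (t + j))
    {D : StLt t} (hDL : ∀ i (hi : i < L.length), D.1 i = L[i]) (hD : D.1 L.length = t + j) :
    ∃ h ∈ fixing t (j + 1), D = hL.word * h := by
  have hlt : ∀ i < L.length, D.1 i < t + j := fun i hi => by
    rw [hDL i hi]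
    exact hL.getElem_lt hi
  have hge : ∀ i, L.length ≤ i → t ≤ D.1 i → t + j ≤ D.1 i := fun i hi hti => by
    have := apply_mono D hi (by omega) hti
    omega
  let h : ℕ → ℕ := fun i => if i < t + j then i else D.1 (L.length + (i - (t + j)))
  have h_lt : ∀ i < t + j, h i = i := fun i hi => if_pos hi
  have h_ge : ∀ i, t + j ≤ i → h i = D.1 (L.length + (i - (t + j))) :=
    fun i hi => if_neg hi.not_gt
  refine ⟨⟨h, mem_StLt_iff.mpr ⟨fun i hi => h_lt i (by omega), fun i i' hii hi hi' => ?_,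
    fun n => ?_⟩⟩, fun i hi => ?_, Subtype.ext (funext fun i => ?_)⟩
  · by_cases h1 : i < t + j
    · by_cases h2 : i' < t + j
      · rwa [h_lt i h1, h_lt i' h2]
      · rw [h_ge i' (by omega)] at hi' ⊢
        rw [h_lt i h1]
        have := hge _ (by omega) hi'
        omega
    · rw [h_ge i' (by omega)] at hi' ⊢
      rw [h_ge i (by omega)] at hi ⊢
      exact apply_mono D (by omega) hi hi'
  · by_cases hn : n < t + j
    · exact ⟨n, h_lt n hn⟩
    · obtain ⟨i, rfl⟩ := exists_apply_eq D n
      have hi : L.length ≤ i := by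
        by_contra! hi
        exact hn (hlt i hi)
      exact ⟨t + j + (i - L.length), (h_ge _ (by omega)).trans (congrArg D.1 (by omega))⟩
  · by_cases h1 : i < t + j
    · exact h_lt i h1
    · have : i = t + j := by omega
      subst this
      refine (h_ge _ le_rfl).trans ?_
      simpa using hD
  · rw [mul_apply]
    by_cases hi : i < L.length
    · rw [hL.word_of_lt hi, hDL i hi]
      exact (h_lt _ (hL.getElem_lt hi)).symm
    · rw [hL.word_of_le (by omega)]
      exact (congrArg D.1 (by omega)).trans (h_ge _ (by omega)).symm

theorem exists_eq_word_mul (D : StLt t) (j : ℕ) :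
    ∃ (L : List ℕ) (hL : IsApprox t L (t + j)), ∃ h ∈ fixing t (j + 1), D = hL.word * h := by
  classical
  have hex := exists_apply_eq D (t + j)
  have hL := isApprox_restr D (by omega) (Nat.find_spec hex) fun i hi => Nat.find_min hex hi
  exact ⟨_, hL, hL.exists_eq_word_mul (by simp) (by simpa using Nat.find_spec hex)⟩

theorem IsApprox.exists_mul_word_eq {L : List ℕ} {j m : ℕ} (hL : IsApprox t L (t + j))
    (hm : L.length = t + m) {h : StLt t} (hh : h ∈ fixing t (m + 1)) :
    ∃ h' ∈ fixing t (j + 1), h * hL.word = hL.word * h' := by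
  refine hL.exists_eq_word_mul (fun i hi => ?_) ?_
  · rw [mul_apply, hh i (by omega), hL.word_of_lt hi]
  · rw [mul_apply, hh _ (by omega), hL.word_of_le le_rfl, Nat.sub_self, add_zero]

theorem IsApprox.exists_word_mul_eq {L : List ℕ} {j m : ℕ} (hL : IsApprox t L (t + j))
    (hm : L.length = t + m) {h : StLt t} (hh : h ∈ fixing t (j + 1)) :
    ∃ h' ∈ fixing t (m + 1), h' * hL.word = hL.word * h := by
  have hjm : t + j ≤ t + m := hm ▸ hL.le
  have hh' : ∀ i < t + j, h.1 i = i := fun i hi => hh i (by omega)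
  have hge : ∀ i, t + j ≤ i → t ≤ h.1 i → t + j ≤ h.1 i :=
    fun i hi => le_apply_of_mem_fixing hh hi
  let y : ℕ → ℕ := fun i => h.1 (t + j + (i - (t + m)))
  let f : ℕ → ℕ := fun i =>
    if i < t + m then i else if y i < t then y i else t + m + (y i - (t + j))
  have f_lt : ∀ i < t + m, f i = i := fun i hi => if_pos hi
  have f_const : ∀ i, t + m ≤ i → y i < t → f i = y i := fun i hi hy => by
    simp only [f]
    rw [if_neg (by omega), if_pos hy]
  have f_var : ∀ i, t + m ≤ i → t ≤ y i → f i = t + m + (y i - (t + j)) := fun i hi hy => by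
    simp only [f]
    rw [if_neg (by omega), if_neg (by omega)]
  have y_var : ∀ i, t + m ≤ i → t ≤ f i → t ≤ y i := fun i hi hf => by
    by_contra! hy
    rw [f_const i hi hy] at hf
    omega
  refine ⟨⟨f, mem_StLt_iff.mpr ⟨fun i hi => f_lt i (by omega), fun i i' hii hi hi' => ?_,
    fun n => ?_⟩⟩, fun i hi => ?_, Subtype.ext (funext fun i => ?_)⟩
  · by_cases h1 : i' < t + m
    · rwa [f_lt i (by omega), f_lt i' h1]
    · rw [f_var i' (by omega) (y_var i' (by omega) hi')]
      by_cases h2 : i < t + m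
      · rw [f_lt i h2]
        omega
      · have hy := y_var i (by omega) hi
        have hy' := y_var i' (by omega) hi'
        rw [f_var i (by omega) hy]
        have : y i ≤ y i' := apply_mono h (by omega) hy hy'
        omega
  · by_cases hn : n < t + m
    · exact ⟨n, f_lt n hn⟩
    · obtain ⟨i, hi⟩ := exists_apply_eq h (t + j + (n - (t + m)))
      have hij : t + j ≤ i := by
        by_contra! hij
        rw [hh' i hij] at hi
        omega
      have hy : y (t + m + (i - (t + j))) = t + j + (n - (t + m)) := by
        rw [← hi]
        exact congrArg h.1 (by omega)
      refine ⟨t + m + (i - (t + j)), ?_⟩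
      rw [f_var _ (by omega) (by omega), hy]
      omega
  · by_cases h1 : i < t + m
    · exact f_lt i h1
    · have : i = t + m := by omega
      subst this
      have hy : y (t + m) = t + j := by
        simp only [y, Nat.sub_self, add_zero]
        exact hh _ (by omega)
      refine (f_var _ le_rfl (by omega)).trans ?_
      omega
  · rw [mul_apply, mul_apply]
    change hL.word.1 (f i) = _
    by_cases hi : i < L.length
    · rw [f_lt i (by omega), hL.word_of_lt hi, hh' _ (hL.getElem_lt hi)]
    · rw [hL.word_of_le (i := i) (by omega)]
      have hy : h.1 (t + j + (i - L.length)) = y i := by simp only [y, hm]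
      rw [hy]
      by_cases hyt : y i < t
      · rw [f_const i (by omega) hyt, apply_of_lt hL.word hyt]
      · have := hge (t + j + (i - (t + m))) (by omega) (not_lt.mp hyt)
        rw [f_var i (by omega) (by omega), hL.word_of_le (by omega)]
        change t + j ≤ y i at this
        omega

theorem finite_isApprox (t m : ℕ) :
    {x : List ℕ × ℕ | x.1.length = t + m ∧ IsApprox t x.1 (t + x.2)}.Finite := by
  have h : {L : List ℕ | L.length = t + m ∧ ∀ a ∈ L, a < t + m}.Finite := by
    refine ((List.finite_length_eq (Fin (t + m)) (t + m)).image (List.map Fin.val)).subset ?_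
    rintro L ⟨hL, hlt⟩
    exact ⟨L.pmap Fin.mk hlt, by simp [hL], by simp [List.map_pmap]⟩
  refine (h.prod (Set.finite_Iic m)).subset ?_
  rintro ⟨L, j⟩ ⟨hL, hA⟩
  have := hA.le
  refine ⟨⟨hL, fun a ha => ?_⟩, ?_⟩
  · have := (hA.mem_iff a).mp ha
    simp only at *
    omega
  · simp only [Set.mem_Iic] at *
    omega

theorem diagonalizes_fixing (t : ℕ) : Diagonalizes (fixing t) := by
  intro Φ her dense k
  let Q : ℕ → StLt t → Prop := fun m f => Φ f m ∧ ∀ l, m = l + 1 →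
    ∀ (L : List ℕ) (j : ℕ) (hL : IsApprox t L (t + j)), L.length = t + l →
      Φ (f * hL.word) (j + 1)
  have herW : ∀ (L : List ℕ) (j : ℕ) (hL : IsApprox t L (t + j)) (l : ℕ), L.length = t + l →
      ∀ f, Φ (f * hL.word) (j + 1) → ∀ h ∈ fixing t (l + 1), Φ (f * h * hL.word) (j + 1) := by
    intro L j hL l hl f hf h hh
    obtain ⟨h', hh', heq⟩ := hL.exists_mul_word_eq hl hh
    rw [mul_assoc, heq, ← mul_assoc]
    exact her _ _ hf h' hh'
  obtain ⟨g, hg, H⟩ := exists_forall_of_hereditary_of_dense (Q := Q)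
    (by
      rintro m f ⟨h1, h2⟩ h hh
      refine ⟨her _ _ h1 h hh, ?_⟩
      rintro l rfl L j hL hl
      exact herW L j hL l hl f (h2 l rfl L j hL hl) h hh)
    (by
      intro m f
      obtain ⟨x, hx, hΦx⟩ := dense f m
      rcases m with _ | l
      · exact ⟨x, hx, hΦx, by simp⟩
      suffices ∀ s : Set (List ℕ × ℕ), s.Finite → ∃ h ∈ fixing t (l + 1),
          ∀ y ∈ s, ∀ hL : IsApprox t y.1 (t + y.2), y.1.length = t + l →
            Φ (f * x * h * hL.word) (y.2 + 1) by
        obtain ⟨h, hh, H⟩ := this _ (finite_isApprox t l)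
        refine ⟨x * h, mul_mem hx hh, ?_, ?_⟩
        · simpa only [mul_assoc] using her _ _ hΦx h hh
        · rintro l' hl L j hL hLl
          obtain rfl : l = l' := by omega
          simpa only [mul_assoc] using H (L, j) ⟨hLl, hL⟩ hL hLl
      intro s hs
      induction s, hs using Set.Finite.induction_on with
      | empty => exact ⟨1, one_mem _, by simp⟩
      | @insert y s _ _ ih =>
        obtain ⟨h, hh, H⟩ := ih
        by_cases hy : IsApprox t y.1 (t + y.2) ∧ y.1.length = t + l
        · obtain ⟨hL, hl⟩ := hy
          obtain ⟨z, hz, hΦz⟩ := dense (f * x * h * hL.word) (y.2 + 1)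
          obtain ⟨z', hz', heq⟩ := hL.exists_word_mul_eq hl hz
          refine ⟨h * z', mul_mem hh hz', fun y' hy' hL' hl' => ?_⟩
          rcases hy' with rfl | hy'
          · rw [← mul_assoc, mul_assoc, heq, ← mul_assoc]
            exact hΦz
          · rw [← mul_assoc]
            exact herW _ _ hL' l hl' _ (H y' hy' hL' hl') z' hz'
        · refine ⟨h, hh, fun y' hy' hL' hl' => ?_⟩
          rcases hy' with rfl | hy'
          · exact absurd ⟨hL', hl'⟩ hy
          · exact H y' hy' hL' hl') k
  refine ⟨g, hg, fun C j hj => ?_⟩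
  rcases j with _ | j
  · exact her _ _ (H 0 hj).1 C (mem_fixing_zero C)
  · obtain ⟨L, hL, h, hh, rfl⟩ := exists_eq_word_mul C j
    have hle := hL.le
    obtain ⟨l, hl⟩ := Nat.exists_eq_add_of_le hL.le_length
    rw [← mul_assoc]
    exact her _ _ ((H (l + 1) (by omega)).2 l rfl L j hL hl) h hh

end StLt

end AscendingWords

section Pigeonhole

variable {t : ℕ}

theorem exists_eq_takeWhile_append {w : List ℕ} (h : t ∈ w) :
    ∃ r, w = w.takeWhile (· ≠ t) ++ t :: r := by
  induction w with
  | nil => simp at h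
  | cons a w ih =>
    by_cases hat : a = t
    · exact ⟨w, by simp [hat]⟩
    · obtain ⟨r, hr⟩ := ih (by simpa [Ne.symm hat] using h)
      refine ⟨r, ?_⟩
      rw [List.takeWhile_cons_of_pos (by simpa using hat), List.cons_append, ← hr]

theorem lt_of_mem_takeWhile {w : List ℕ} (hw : ∀ n ∈ w, n ≤ t) :
    ∀ n ∈ w.takeWhile (· ≠ t), n < t := fun n hn =>
  lt_of_le_of_ne (hw n (List.takeWhile_subset _ hn))
    (by simpa using List.mem_takeWhile_imp hn)

theorem mem_map_substVar {c n : ℕ} {w : List ℕ} (h : n ∈ w.map (substVar t c)) :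
    n < t ∨ n = c := by
  obtain ⟨m, -, rfl⟩ := List.mem_map.mp h
  unfold substVar
  split_ifs with hm
  · exact Or.inl hm
  · exact Or.inr rfl

theorem pairwise_map_substVar (t c : ℕ) (w : List ℕ) :
    (w.map (substVar t c)).Pairwise fun a b => t ≤ a → t ≤ b → a ≤ b := by
  refine List.pairwise_of_forall_mem_list fun a ha b hb hta htb => ?_
  rcases mem_map_substVar ha with h | rfl
  · omega
  · rcases mem_map_substVar hb with h | rfl
    · omega
    · exact le_rfl

namespace StLt

/-- The concatenation of an increasing sequence of approximations. -/
theorem exists_of_prefix_chain {j : ℕ} {H : ℕ → List ℕ} (hH : ∀ k, IsApprox t (H k) (t + j + k))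
    (hpre : ∀ k, H k <+: H (k + 1)) :
    ∃ f : StLt t, ∀ k i (hi : i < (H k).length), f.1 i = (H k)[i] := by
  have hlen : ∀ k, k ≤ (H k).length := fun k => by
    have := (hH k).le
    omega
  have hpre' : ∀ k k', k ≤ k' → H k <+: H k' := fun k k' h => by
    induction k', h using Nat.le_induction with
    | base => exact List.prefix_rfl
    | succ k' _ ih => exact ih.trans (hpre k')
  have stable : ∀ k k' i, i < (H k).length → i < (H k').length →
      (hH k).word.1 i = (hH k').word.1 i := by
    intro k k' i hi hi'
    rw [(hH k).word_of_lt hi, (hH k').word_of_lt hi']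
    rcases le_total k k' with h | h
    · exact (hpre' k k' h).getElem hi
    · exact ((hpre' k' k h).getElem hi').symm
  have hself : ∀ i d, i < (H (i + d + 1)).length := fun i d =>
    lt_of_lt_of_le (by omega) (hlen (i + d + 1))
  have hf : ∀ k i, i < (H k).length → (hH (i + 1)).word.1 i = (hH k).word.1 i :=
    fun k i hi => stable _ _ _ (hself i 0) hi
  refine ⟨⟨fun i => (hH (i + 1)).word.1 i, mem_StLt_iff.mpr
    ⟨fun i hi => apply_of_lt _ hi, fun i i' hii hi hi' => ?_, fun n => ?_⟩⟩,
    fun k i hi => (hf k i hi).trans ((hH k).word_of_lt hi)⟩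
  · have hlt : i < (H (i' + 1)).length := lt_of_le_of_lt hii (hself i' 0)
    rw [hf _ _ hlt] at hi ⊢
    exact apply_mono _ hii hi hi'
  · obtain ⟨i, hi, h⟩ := List.mem_iff_getElem.mp (((hH (n + 1)).mem_iff n).mpr (by omega))
    exact ⟨i, (hf _ _ hi).trans (((hH (n + 1)).word_of_lt hi).trans h)⟩

theorem hasPigeonhole_fixing (t : ℕ) : HasPigeonhole (fixing t) := by
  intro j S hS
  obtain ⟨e, he, hte, hej⟩ : ∃ e, (e = t ∨ e = t + 1) ∧ t ≤ e ∧ (t < e ↔ 0 < j) := by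
    rcases Nat.eq_zero_or_pos j with h | h
    · exact ⟨t, Or.inl rfl, le_rfl, by omega⟩
    · exact ⟨t + 1, Or.inr rfl, by omega, by omega⟩
  set x := t + j - 1 with hx
  let pre : List ℕ → List ℕ := fun s => List.range (t + j) ++ s.map (substVar t x)
  have pre_append : ∀ s s', pre (s ++ s') = pre s ++ s'.map (substVar t x) := fun s s' => by
    simp only [pre, List.map_append, List.append_assoc]
  have pre_fix : ∀ s i (hi : i < (pre s).length), i < t + j → (pre s)[i] = i := by
    intro s i hi hij
    simp only [pre]
    rw [List.getElem_append_left (by simpa using hij), List.getElem_range]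
  have hpreA : ∀ s : List ℕ, (∀ n ∈ s, n < e) → IsApprox t (pre s) (t + j) := by
    intro s hs
    have hmem : ∀ a ∈ s.map (substVar t x), a < t ∨ (0 < j ∧ a = x) := by
      intro a ha
      obtain ⟨m, hm, rfl⟩ := List.mem_map.mp ha
      have := hs m hm
      unfold substVar
      split_ifs with hmt
      · exact Or.inl hmt
      · exact Or.inr ⟨hej.mp (by omega), rfl⟩
    refine (isApprox_range j).append (pairwise_map_substVar t x s) (fun a ha hta => ?_)
      fun a => ⟨?_, Or.inl⟩
    · rcases hmem a ha with h | h <;> omega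
    · rintro (h | h)
      · exact h
      · rcases hmem a h with h | h <;> omega
  obtain ⟨w₀, w, F, hw₀, hw, hF0, hF, hcol⟩ := exists_variable_words he
    fun s => ∃ hL : IsApprox t (pre s) (t + j), hL.word ∈ S
  let H : ℕ → List ℕ := fun k =>
    Nat.rec (pre w₀) (fun k L => L ++ (w k).map (substVar t (t + j + k))) k
  have H_succ : ∀ k, H (k + 1) = H k ++ (w k).map (substVar t (t + j + k)) := fun _ => rfl
  have hHA : ∀ k, IsApprox t (H k) (t + j + k) := by
    intro k
    induction k with
    | zero => exact hpreA w₀ hw₀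
    | succ k ih =>
      rw [H_succ]
      refine ih.append (pairwise_map_substVar _ _ _) (fun a ha hta => ?_) fun a => ⟨?_, ?_⟩
      · rcases mem_map_substVar ha with h | h <;> omega
      · rintro (h | h)
        · omega
        · rcases mem_map_substVar h with h | h <;> omega
      · intro ha
        rcases (Nat.lt_succ_iff_lt_or_eq.mp ha) with h | rfl
        · exact Or.inl h
        · exact Or.inr (List.mem_map.mpr ⟨t, (hw k).1, substVar_self _ _⟩)
  obtain ⟨f, hf⟩ := exists_of_prefix_chain hHA fun k => by
    rw [H_succ]
    exact List.prefix_append _ _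
  have hfj : f ∈ fixing t j := by
    intro i hi
    have hlt : i < (H 0).length := lt_of_lt_of_le hi (hHA 0).le
    rw [hf 0 i hlt]
    exact pre_fix w₀ i hlt hi
  have key : ∀ C ∈ fixing t j, ∃ k, ∃ s ∈ F k, (f * C ∈ S ↔
      ∃ hL : IsApprox t (pre (s ++ (w k).takeWhile (· ≠ t))) (t + j), hL.word ∈ S) := by
    intro C hC
    classical
    have hex := exists_apply_eq C (t + j)
    have hfirst := Nat.find_spec hex
    have hbefore : ∀ i < Nat.find hex, C.1 i ≠ t + j := fun i hi => Nat.find_min hex hi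
    have hle := apply_le C (Nat.find hex)
    rw [hfirst] at hle
    obtain ⟨k, hk⟩ := Nat.exists_eq_add_of_le hle
    rw [hk] at hfirst hbefore
    have letter : ∀ q < k, ∃ a < e, C.1 (t + j + q) = substVar t x a := by
      intro q hq
      by_cases hc : C.1 (t + j + q) < t
      · exact ⟨_, by omega, (substVar_of_lt x hc).symm⟩
      have h1 := hbefore (t + j + q) (by omega)
      have h2 := apply_mono C (i := t + j + q) (i' := t + j + k) (by omega) (by omega) (by omega)
      have h3 : C.1 x = x := hC x (by omega)
      have h4 := apply_mono C (i := x) (i' := t + j + q) (by omega) (by omega) (by omega)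
      exact ⟨t, hej.mpr (by omega), by rw [substVar_self]; omega⟩
    have hmap : ∀ q ≤ k, ∃ s ∈ F q, (∀ n ∈ s, n < e) ∧ (H q).map C.1 = pre s := by
      intro q hq
      induction q with
      | zero =>
        refine ⟨w₀, hF0, hw₀, ?_⟩
        refine (List.map_congr_left fun n hn => ?_).trans (List.map_id (pre w₀))
        exact hC n (((hpreA w₀ hw₀).mem_iff n).mp hn)
      | succ q ih =>
        obtain ⟨s, hs, hse, hmap⟩ := ih (by omega)
        obtain ⟨a, ha, hCa⟩ := letter q (by omega)
        refine ⟨_, hF q s hs a ha, fun n hn => ?_, ?_⟩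
        · rcases List.mem_append.mp hn with h | h
          · exact hse n h
          · rcases mem_map_substVar h with h | h <;> omega
        · rw [H_succ, List.map_append, hmap, pre_append, List.map_map, List.map_map]
          congr 1
          refine List.map_congr_left fun n hn => ?_
          simp only [Function.comp_apply]
          rcases ((hw q).2 n hn).lt_or_eq with h | rfl
          · rw [substVar_of_lt _ h, substVar_of_lt _ h, substVar_of_lt _ h, apply_of_lt C h]
          · rw [substVar_self, substVar_self, hCa]
    obtain ⟨s, hs, hse, hmaps⟩ := hmap k le_rfl
    set v := (w k).takeWhile (· ≠ t) with hv
    have hvt : ∀ n ∈ v, n < t := lt_of_mem_takeWhile (hw k).2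
    obtain ⟨r, hr⟩ := exists_eq_takeWhile_append (hw k).1
    have hHk : H (k + 1) = (H k ++ v) ++ (t + j + k) :: r.map (substVar t (t + j + k)) := by
      rw [H_succ]
      conv_lhs => rw [hr]
      rw [← hv, List.map_append, List.map_cons, substVar_self, map_substVar_of_lt _ hvt,
        List.append_assoc]
    have hL : IsApprox t (pre (s ++ v)) (t + j) := hpreA _ fun n hn => by
      rcases List.mem_append.mp hn with h | h
      · exact hse n h
      · have := hvt n h
        omega
    have hKL : pre (s ++ v) = (H k ++ v).map C.1 := by
      rw [pre_append, List.map_append, hmaps, map_substVar_of_lt _ hvt]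
      congr 1
      exact ((List.map_congr_left fun n hn => apply_of_lt C (hvt n hn)).trans v.map_id).symm
    have hlen : (pre (s ++ v)).length = (H k ++ v).length := by rw [hKL, List.length_map]
    have hlt : ∀ i ≤ (H k ++ v).length, i < (H (k + 1)).length := by
      intro i hi
      rw [hHk, List.length_append (as := H k ++ v), List.length_cons]
      omega
    obtain ⟨h, hh, heq⟩ := hL.exists_eq_word_mul (D := f * C)
      (fun i hi => by
        have hi' : i < (H k ++ v).length := hlen ▸ hi
        rw [mul_apply, hf (k + 1) i (hlt i hi'.le), List.getElem_of_eq hKL hi, List.getElem_map,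
          List.getElem_of_eq hHk, List.getElem_append_left hi'])
      (by
        rw [mul_apply, hf (k + 1) _ (hlt _ hlen.le), List.getElem_of_eq hHk,
          List.getElem_append_right hlen.ge]
        simpa [hlen] using hfirst)
    refine ⟨k, s, hs, ?_⟩
    rw [heq, ← hS hL.word (fun i hi => ?_) h hh]
    · exact ⟨fun h => ⟨hL, h⟩, fun ⟨_, h⟩ => h⟩
    · have hi' : i < (pre (s ++ v)).length := lt_of_lt_of_le hi hL.le
      rw [hL.word_of_lt hi', pre_fix _ _ hi' hi]
  refine ⟨f, hfj, hcol.imp (fun H C hC => ?_) fun H C hC => ?_⟩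
  · obtain ⟨k, s, hs, h⟩ := key C hC
    exact h.mpr (H k s hs)
  · obtain ⟨k, s, hs, h⟩ := key C hC
    exact fun hmem => H k s hs (h.mp hmem)

end StLt

end Pigeonhole

section EllentuckTopology

variable {t : ℕ}

namespace StLt

/-- The approximation order on ascending parameter words: `A = B * C` for some `C`. -/
abbrev IsBelow (t : ℕ) (A B : StLt t) : Prop := ∃ C ∈ StLt t, A.1 = compP B.1 C

/-- The approximations of ascending parameter words. -/
noncomputable abbrev approx (t n : ℕ) (A : StLt t) : List ℕ := rP t n A.1

/-- The index `j` such that right multiplication by `fixing t j` preserves the `n`-th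
approximation. -/
def stage (n : ℕ) : ℕ := if n = 0 then 0 else n + 1

theorem isBelow_mul (A C : StLt t) : IsBelow t (A * C) A := ⟨C.1, C.2, rfl⟩

theorem IsBelow.exists_eq_mul {A B : StLt t} (h : IsBelow t A B) : ∃ C, A = B * C := by
  obtain ⟨C, hC, h⟩ := h
  exact ⟨⟨C, hC⟩, Subtype.ext h⟩

theorem IsBelow.trans {A B C : StLt t} (h : IsBelow t A B) (h' : IsBelow t B C) :
    IsBelow t A C := by
  obtain ⟨X, rfl⟩ := h.exists_eq_mul
  obtain ⟨Y, rfl⟩ := h'.exists_eq_mul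
  rw [mul_assoc]
  exact isBelow_mul _ _

theorem approx_zero (A : StLt t) : approx t 0 A = [] := if_pos rfl

theorem approx_eq_restr {n : ℕ} (hn : n ≠ 0) (A : StLt t) :
    approx t n A = restr A.1 (sInf {i | A.1 i = t + n}) := by
  unfold approx rP
  rw [if_neg hn]
  exact List.ext_getElem (by simp) (by simp)

theorem apply_length_approx {n : ℕ} (hn : n ≠ 0) (A : StLt t) :
    A.1 (approx t n A).length = t + n := by
  rw [approx_eq_restr hn, length_restr]
  exact Nat.sInf_mem (s := {i | A.1 i = t + n}) (exists_apply_eq A _)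

theorem getElem_approx {n : ℕ} (A : StLt t) {i : ℕ} (hi : i < (approx t n A).length) :
    (approx t n A)[i] = A.1 i := by
  by_cases hn : n = 0
  · subst hn
    simp [approx_zero] at hi
  · rw [List.getElem_of_eq (approx_eq_restr hn A) hi, getElem_restr]

theorem isApprox_approx {n : ℕ} (hn : n ≠ 0) (A : StLt t) :
    IsApprox t (approx t n A) (t + n) := by
  rw [approx_eq_restr hn]
  exact isApprox_restr A (by omega)
    (Nat.sInf_mem (s := {i | A.1 i = t + n}) (exists_apply_eq A _))
    fun i hi => Nat.notMem_of_lt_sInf (s := {i | A.1 i = t + n}) hi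

theorem approx_eq_of_isApprox {n : ℕ} (hn : n ≠ 0) {A : StLt t} {L : List ℕ}
    (hL : IsApprox t L (t + n)) (hAL : ∀ i (hi : i < L.length), A.1 i = L[i])
    (hA : A.1 L.length = t + n) : approx t n A = L := by
  have hs : sInf {i | A.1 i = t + n} = L.length := by
    refine le_antisymm (Nat.sInf_le hA) (le_csInf ⟨_, hA⟩ fun i hi => ?_)
    by_contra! hlt
    have h1 := hL.getElem_lt hlt
    rw [← hAL i hlt, Set.mem_ofPred_eq.mp hi] at h1
    exact lt_irrefl _ h1
  rw [approx_eq_restr hn, hs]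
  exact List.ext_getElem (by simp) fun i _ hi => by rw [getElem_restr, hAL i hi]

theorem approx_mul {n : ℕ} (A : StLt t) {h : StLt t} (hh : h ∈ fixing t (stage n)) :
    approx t n (A * h) = approx t n A := by
  by_cases hn : n = 0
  · subst hn
    simp only [approx_zero]
  rw [stage, if_neg hn] at hh
  have hL := isApprox_approx hn A
  refine approx_eq_of_isApprox hn hL (fun i hi => ?_) ?_
  · have := hL.getElem_lt hi
    rw [getElem_approx] at this ⊢
    exact hh _ (by omega)
  · rw [mul_apply, apply_length_approx hn]
    exact hh _ (by omega)

theorem eq_of_approx_eq {n n' : ℕ} {A B : StLt t} (h : approx t n A = approx t n' B) :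
    n = n' := by
  have mem_iff : ∀ (n : ℕ) (A : StLt t) (a : ℕ), t ≤ a → (a ∈ approx t n A ↔ a < t + n) := by
    intro n A a ha
    by_cases hn : n = 0
    · subst hn
      simpa [approx_zero] using ha
    · exact (isApprox_approx hn A).mem_iff a
  by_contra hne
  rcases Nat.lt_or_gt_of_ne hne with hlt | hlt
  · have h1 := (mem_iff n' B (t + n) (by omega)).mpr (by omega)
    rw [← h, mem_iff n A _ (by omega)] at h1
    omega
  · have h1 := (mem_iff n A (t + n') (by omega)).mpr (by omega)
    rw [h, mem_iff n' B _ (by omega)] at h1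
    omega

theorem mem_EllSet_approx {n : ℕ} {A B : StLt t} :
    B ∈ EllSet (IsBelow t) (approx t) (approx t n A) A ↔ ∃ h ∈ fixing t (stage n), B = A * h := by
  constructor
  · rintro ⟨hle, n', hn'⟩
    obtain rfl := eq_of_approx_eq hn'
    obtain ⟨C, rfl⟩ := hle.exists_eq_mul
    refine ⟨C, ?_, rfl⟩
    by_cases hn : n' = 0
    · subst hn
      exact mem_fixing_zero C
    rw [stage, if_neg hn]
    intro x hx
    have hL := isApprox_approx hn A
    rcases Nat.lt_succ_iff_lt_or_eq.mp (show x < t + n' + 1 from hx) with hx | rfl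
    · obtain ⟨i, hi, rfl⟩ := List.mem_iff_getElem.mp ((hL.mem_iff x).mpr hx)
      have h1 := getElem_approx (A * C) (hn' ▸ hi)
      rw [List.getElem_of_eq hn', mul_apply, ← getElem_approx A hi] at h1
      exact h1.symm
    · have h1 := apply_length_approx hn (A * C)
      rwa [hn', mul_apply, apply_length_approx hn A] at h1
  · rintro ⟨h, hh, rfl⟩
    exact ⟨isBelow_mul A h, n, approx_mul A hh⟩

theorem mul_mem_EllSet {a : List ℕ} {n : ℕ} {A B : StLt t} (hB : IsBelow t B A)
    (hn : approx t n B = a) {h : StLt t} (hh : h ∈ fixing t (stage n)) :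
    B * h ∈ EllSet (IsBelow t) (approx t) a A :=
  ⟨(isBelow_mul B h).trans hB, n, (approx_mul B hh).trans hn⟩

theorem exists_mul_mem_of_isOpen {U : Set (StLt t)}
    (hU : IsOpen[EllTop (IsBelow t) (approx t)] U) :
    ∀ D ∈ U, ∃ j, ∀ h ∈ fixing t j, D * h ∈ U := by
  induction hU with
  | basic s hs =>
    obtain ⟨a, A, rfl⟩ := hs
    rintro D ⟨hD, n, hn⟩
    exact ⟨stage n, fun h hh => mul_mem_EllSet hD hn hh⟩
  | univ => exact fun _ _ => ⟨0, fun _ _ => trivial⟩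
  | inter s s' _ _ ih ih' =>
    rintro D ⟨hD, hD'⟩
    obtain ⟨j, hj⟩ := ih D hD
    obtain ⟨j', hj'⟩ := ih' D hD'
    exact ⟨max j j', fun h hh => ⟨hj h (fixing_antitone t (le_max_left _ _) hh),
      hj' h (fixing_antitone t (le_max_right _ _) hh)⟩⟩
  | sUnion c _ ih =>
    rintro D ⟨s, hs, hD⟩
    obtain ⟨j, hj⟩ := ih s hs D hD
    exact ⟨j, fun h hh => ⟨s, hs, hj h hh⟩⟩

theorem homogeneous_of_isOpen {U : Set (StLt t)}
    (hU : IsOpen[EllTop (IsBelow t) (approx t)] U) (D : StLt t) (k : ℕ) :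
    ∃ g ∈ fixing t k, (∀ C ∈ fixing t k, D * g * C ∈ U) ∨ ∀ C ∈ fixing t k, D * g * C ∉ U := by
  refine (diagonalizes_fixing t).homogeneous_of_open (hasPigeonhole_fixing t)
    (fun D hD k => ?_) D k
  obtain ⟨j, hj⟩ := exists_mul_mem_of_isOpen hU D hD
  exact ⟨max j k, le_max_right _ _,
    fun h hh => hj h (fixing_antitone t (le_max_left _ _) hh)⟩

theorem isNullFor_of_isNowhereDense {N : Set (StLt t)}
    (hN : @IsNowhereDense _ (EllTop (IsBelow t) (approx t)) N) : IsNullFor (fixing t) N := by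
  let τ : TopologicalSpace (StLt t) := EllTop (IsBelow t) (approx t)
  intro D k
  obtain ⟨g, hg, h | h⟩ := homogeneous_of_isOpen (U := (closure N)ᶜ)
    (isClosed_closure (s := N)).isOpen_compl D k
  · exact ⟨g, hg, fun C hC hmem => h C hC (subset_closure hmem)⟩
  exfalso
  have hopen : IsOpen (EllSet (IsBelow t) (approx t) (approx t (k + 1) (D * g)) (D * g)) :=
    TopologicalSpace.isOpen_generateFrom_of_mem ⟨_, _, rfl⟩
  have hsub : EllSet (IsBelow t) (approx t) (approx t (k + 1) (D * g)) (D * g) ⊆ closure N := by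
    intro B hB
    obtain ⟨C, hC, rfl⟩ := mem_EllSet_approx.mp hB
    refine not_not.mp (h C (fixing_antitone t ?_ hC))
    simp only [stage, Nat.add_eq_zero_iff, one_ne_zero, and_false, if_false]
    omega
  have hmem : D * g ∈ interior (closure N) := mem_interior.mpr
    ⟨_, hsub, hopen, mem_EllSet_approx.mpr ⟨1, one_mem _, (mul_one _).symm⟩⟩
  have hempty : interior (closure N) = ∅ := hN
  rwa [hempty] at hmem

theorem isNullFor_of_isMeagre {N : Set (StLt t)}
    (hN : @IsMeagre _ (EllTop (IsBelow t) (approx t)) N) : IsNullFor (fixing t) N := by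
  let τ : TopologicalSpace (StLt t) := EllTop (IsBelow t) (approx t)
  obtain ⟨c, hc, hcount, hsub⟩ := isMeagre_iff_countable_union_isNowhereDense.mp hN
  obtain ⟨f, hf⟩ := (hcount.insert ∅).exists_eq_range (Set.insert_nonempty _ _)
  have hnull : ∀ n, IsNullFor (fixing t) (f n) := by
    intro n
    have : f n ∈ insert ∅ c := hf ▸ Set.mem_range_self n
    rcases this with h | h
    · exact fun D k => ⟨1, one_mem _, fun C _ => by simp [h]⟩
    · exact isNullFor_of_isNowhereDense (hc _ h)
  intro D k
  obtain ⟨g, hg, H⟩ := (diagonalizes_fixing t).isNullFor_iUnion hnull D k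
  refine ⟨g, hg, fun C hC hmem => H C hC ?_⟩
  obtain ⟨s, hs, hmem⟩ := hsub hmem
  have hs' : s ∈ Set.range f := hf ▸ Set.mem_insert_of_mem _ hs
  obtain ⟨n, rfl⟩ := hs'
  exact Set.mem_iUnion.mpr ⟨n, hmem⟩

end StLt

end EllentuckTopology

/-- **Theorem (Carlson).** For every `t < ω`, `(S_t^<(ω;ω), ≤, r)` is a
topological Ramsey space, where `A ≤ B` iff `A = B·C` for some
`C ∈ S_t^<(ω;ω)`. -/
theorem stlt_is_topological_ramsey_space (t : ℕ) :
    IsTopRamseySpace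
      (fun A B : ↥(StLt t) => ∃ C ∈ StLt t, A.val = compP B.val C)
      (fun n (A : ↥(StLt t)) => rP t n A.val) := by
  constructor
  · rintro S ⟨U, N, hU, hN, rfl⟩ a A ⟨F, hFA, n, rfl⟩
    obtain ⟨g, hg, hgU⟩ := StLt.homogeneous_of_isOpen hU F (StLt.stage n)
    obtain ⟨g', hg', hN⟩ := StLt.isNullFor_of_isMeagre hN (F * g) (StLt.stage n)
    have hgg : g * g' ∈ StLt.fixing t (StLt.stage n) := mul_mem hg hg'
    have hset : ∀ B ∈ EllSet (StLt.IsBelow t) (StLt.approx t) (StLt.approx t n F)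
        (F * (g * g')), ∃ C ∈ StLt.fixing t (StLt.stage n), B = F * (g * g') * C := by
      intro B hB
      rw [← StLt.approx_mul F hgg] at hB
      exact StLt.mem_EllSet_approx.mp hB
    refine ⟨F * (g * g'), StLt.mul_mem_EllSet hFA rfl hgg, ?_⟩
    refine hgU.imp (fun h B hB => ?_) fun h => ?_
    · obtain ⟨C, hC, rfl⟩ := hset B hB
      refine Or.inl ⟨?_, ?_⟩
      · simpa only [mul_assoc] using h (g' * C) (mul_mem hg' hC)
      · simpa only [mul_assoc] using hN C hC
    · refine Set.eq_empty_of_forall_notMem fun B ⟨hB, hmem⟩ => ?_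
      obtain ⟨C, hC, rfl⟩ := hset B hB
      rcases hmem with hmem | hmem
      · refine h (g' * C) (mul_mem hg' hC) ?_
        simpa only [mul_assoc] using hmem.1
      · refine hN C hC ?_
        simpa only [mul_assoc] using hmem.1
  · rintro N hN a A ⟨F, hFA, n, rfl⟩
    obtain ⟨g, hg, hN⟩ := StLt.isNullFor_of_isMeagre hN F (StLt.stage n)
    refine ⟨F * g, StLt.mul_mem_EllSet hFA rfl hg, ?_⟩
    refine Set.eq_empty_of_forall_notMem fun B ⟨hB, hmem⟩ => ?_
    replace hB : B ∈ EllSet (StLt.IsBelow t) (StLt.approx t) (StLt.approx t n F) (F * g) := hB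
    rw [← StLt.approx_mul F hg] at hB
    obtain ⟨C, hC, rfl⟩ := StLt.mem_EllSet_approx.mp hB
    exact hN C hC hmem
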